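/- arXiv:2402.02459 — 2 statements merged into one kernel-verified Lean document; each statement's English description precedes it below -/
import Mathlib

section
/- Let Σ ∈ S^p and τ > 0. A pair (L, D) with L ∈ S^p_+ and D diagonal is the (unique) global minimizer of F(L',D') = τ‖L'‖_* + (1/2)‖Σ − (L'+D')‖_F² over L' ∈ S^p_+ and diagonal D' if and only if L = D_τ^+(Σ − D) and D = pdiag(Σ − L). -/
open Matrix MeasureTheory ProbabilityTheory BigOperators

/-- `pdiag M`: the matrix `M` with all off-diagonal entries set to zero. -/
def pdiag {p : ℕ} (M : Matrix (Fin p) (Fin p) ℝ) : Matrix (Fin p) (Fin p) ℝ :=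
  Matrix.of fun i j => if i = j then M i j else 0

/-- `poffdiag M = M - pdiag M`: the off-diagonal part of `M`. -/
def poffdiag {p : ℕ} (M : Matrix (Fin p) (Fin p) ℝ) : Matrix (Fin p) (Fin p) ℝ :=
  M - pdiag M

/-- Frobenius norm of a real matrix. -/
noncomputable def frobNorm {p q : ℕ} (M : Matrix (Fin p) (Fin q) ℝ) : ℝ :=
  Real.sqrt (∑ i, ∑ j, (M i j) ^ 2)

/-- The singular values of a real matrix (as the square roots of the eigenvalues of `Mᵀ M`,
in no particular order, with multiplicity, padded by zeros). -/
noncomputable def singVals {p q : ℕ} (M : Matrix (Fin p) (Fin q) ℝ) : Fin q → ℝ :=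
  fun i => Real.sqrt ((Matrix.posSemidef_conjTranspose_mul_self M).isHermitian.eigenvalues i)

/-- Nuclear norm: sum of the singular values. -/
noncomputable def nucNorm {p q : ℕ} (M : Matrix (Fin p) (Fin q) ℝ) : ℝ :=
  ∑ i, singVals M i

/-- Spectral (operator) norm: the largest singular value. -/
noncomputable def specNorm {p q : ℕ} (M : Matrix (Fin p) (Fin q) ℝ) : ℝ :=
  ⨆ i, singVals M i

/-- `(2,∞)`-norm: the maximal Euclidean norm of a row. -/
noncomputable def rowNorm {p r : ℕ} (U : Matrix (Fin p) (Fin r) ℝ) : ℝ :=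
  ⨆ i, Real.sqrt (∑ j, (U i j) ^ 2)

/-- `sinΘ` distance between two column-orthonormal matrices, measured in spectral norm:
`‖sinΘ(U, V)‖ = ‖U Uᵀ - V Vᵀ‖`. -/
noncomputable def sinTheta {p r : ℕ} (U V : Matrix (Fin p) (Fin r) ℝ) : ℝ :=
  specNorm (U * Uᵀ - V * Vᵀ)

/-- `eigDesc M k` : the `k`-th largest eigenvalue (1-indexed) of a symmetric matrix `M`. -/
noncomputable def eigDesc {p : ℕ} (M : Matrix (Fin p) (Fin p) ℝ) (k : ℕ) : ℝ :=
  if h : M.IsHermitian then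
    (((List.ofFn h.eigenvalues).insertionSort (· ≥ ·)).getD (k - 1) 0)
  else 0

/-- `svDesc M k` : the `k`-th largest singular value (1-indexed) of `M`. -/
noncomputable def svDesc {p q : ℕ} (M : Matrix (Fin p) (Fin q) ℝ) (k : ℕ) : ℝ :=
  (((List.ofFn (singVals M)).insertionSort (· ≥ ·)).getD (k - 1) 0)

/-- Eigenvalue soft-thresholding operator `D_τ⁺`: for a symmetric matrix
`M = Σᵢ λᵢ uᵢ uᵢᵀ`, `D_τ⁺(M) = Σᵢ max (λᵢ - τ) 0 • uᵢ uᵢᵀ` (junk value `0` otherwise). -/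
noncomputable def softThresh {p : ℕ} (τ : ℝ) (M : Matrix (Fin p) (Fin p) ℝ) :
    Matrix (Fin p) (Fin p) ℝ :=
  if h : M.IsHermitian then
    (h.eigenvectorUnitary : Matrix (Fin p) (Fin p) ℝ) *
      Matrix.diagonal (fun i => max (h.eigenvalues i - τ) 0) *
      (star (h.eigenvectorUnitary : Matrix (Fin p) (Fin p) ℝ))
  else 0

/-- The `p × r` matrix whose columns are (orthonormal) eigenvectors of the symmetric matrix
`M` corresponding to its `r` largest eigenvalues ("first `r` eigenvectors"). -/
noncomputable def topEigenvectors {p : ℕ} (M : Matrix (Fin p) (Fin p) ℝ) (r : ℕ) :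
    Matrix (Fin p) (Fin r) ℝ :=
  if h : M.IsHermitian then
    Matrix.of fun i (j : Fin r) =>
      if hj : (j : ℕ) < p then
        (h.eigenvectorUnitary : Matrix (Fin p) (Fin p) ℝ) i
          ((Tuple.sort h.eigenvalues) (Fin.rev ⟨(j : ℕ), hj⟩))
      else 0
  else 0

/-- The objective function `F(L, D) = τ ‖L‖_* + (1/2) ‖Σ - (L + D)‖_F²`. -/
noncomputable def objF {p : ℕ} (τ : ℝ) (S L D : Matrix (Fin p) (Fin p) ℝ) : ℝ :=
  τ * nucNorm L + (1 / 2) * (frobNorm (S - (L + D))) ^ 2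

/-- `(L, D)` is a global minimizer of the relaxed-MTFA objective `F` over
`L ∈ S^p₊` and diagonal `D`. -/
def IsRMTFAMin {p : ℕ} (τ : ℝ) (S L D : Matrix (Fin p) (Fin p) ℝ) : Prop :=
  L.PosSemidef ∧ D = pdiag D ∧
    ∀ L' D' : Matrix (Fin p) (Fin p) ℝ, L'.PosSemidef → D' = pdiag D' →
      objF τ S L D ≤ objF τ S L' D'

section RMTFAHelpers

open scoped MatrixOrder Matrix.Norms.L2Operator in
theorem aux_psd_sq_inj {p : ℕ} {A B : Matrix (Fin p) (Fin p) ℝ} (hA : A.PosSemidef)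
    (hB : B.PosSemidef) (h : A * A = B * B) : A = B :=
  (CFC.mul_self_eq_mul_self_iff A B hA.nonneg hB.nonneg).1 h

theorem aux_conj_psd {p : ℕ} (U : Matrix (Fin p) (Fin p) ℝ) (d : Fin p → ℝ)
    (hd : ∀ i, 0 ≤ d i) : (U * Matrix.diagonal d * star U).PosSemidef := by
  have h : (Matrix.diagonal d).PosSemidef := Matrix.PosSemidef.diagonal hd
  simpa [Matrix.star_eq_conjTranspose] using h.mul_mul_conjTranspose_same U

theorem aux_spectral {p : ℕ} {A : Matrix (Fin p) (Fin p) ℝ} (h : A.IsHermitian) :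
    A = (h.eigenvectorUnitary : Matrix (Fin p) (Fin p) ℝ) *
      Matrix.diagonal h.eigenvalues *
      (star (h.eigenvectorUnitary : Matrix (Fin p) (Fin p) ℝ)) := by
  have := h.spectral_theorem
  rw [Unitary.conjStarAlgAut_apply] at this
  exact this

theorem aux_conj_mul {p : ℕ} (U : Matrix (Fin p) (Fin p) ℝ) (hU : star U * U = 1)
    (d e : Fin p → ℝ) :
    (U * Matrix.diagonal d * star U) * (U * Matrix.diagonal e * star U) =
      U * Matrix.diagonal (fun i => d i * e i) * star U := by
  rw [← Matrix.diagonal_mul_diagonal]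
  calc _ = U * Matrix.diagonal d * (star U * U) * Matrix.diagonal e * star U := by
        simp only [Matrix.mul_assoc]
    _ = _ := by rw [hU]; simp only [Matrix.mul_assoc, Matrix.mul_one, Matrix.one_mul]

theorem aux_conj_trace {p : ℕ} (U : Matrix (Fin p) (Fin p) ℝ) (hU : star U * U = 1)
    (d : Fin p → ℝ) : (U * Matrix.diagonal d * star U).trace = ∑ i, d i := by
  rw [Matrix.trace_mul_cycle, hU, Matrix.one_mul, Matrix.trace_diagonal]

theorem aux_nucNorm {p : ℕ} {L : Matrix (Fin p) (Fin p) ℝ} (hL : L.PosSemidef) :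
    nucNorm L = L.trace := by
  set h := (Matrix.posSemidef_conjTranspose_mul_self L).isHermitian with hh
  have hU : star (h.eigenvectorUnitary : Matrix (Fin p) (Fin p) ℝ) *
      (h.eigenvectorUnitary : Matrix (Fin p) (Fin p) ℝ) = 1 :=
    Unitary.coe_star_mul_self _
  have hnn : ∀ i, 0 ≤ h.eigenvalues i :=
    (Matrix.posSemidef_conjTranspose_mul_self L).eigenvalues_nonneg
  have key : (h.eigenvectorUnitary : Matrix (Fin p) (Fin p) ℝ) *
      Matrix.diagonal (fun i => Real.sqrt (h.eigenvalues i)) *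
      (star (h.eigenvectorUnitary : Matrix (Fin p) (Fin p) ℝ)) = L := by
    apply aux_psd_sq_inj (aux_conj_psd _ _ (fun i => Real.sqrt_nonneg _)) hL
    rw [aux_conj_mul _ hU]
    simp only [Real.mul_self_sqrt (hnn _)]
    rw [← aux_spectral h, hL.isHermitian.eq]
  rw [← key, aux_conj_trace _ hU, key]
  rfl

theorem aux_trace_nonneg {p : ℕ} {U L : Matrix (Fin p) (Fin p) ℝ} (d : Fin p → ℝ)
    (hd : ∀ i, 0 ≤ d i) (hL : L.PosSemidef) :
    0 ≤ (U * Matrix.diagonal d * star U * L).trace := by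
  have h1 : (U * Matrix.diagonal d * star U * L).trace =
      (Matrix.diagonal d * (Uᴴ * L * U)).trace := by
    rw [Matrix.star_eq_conjTranspose, Matrix.mul_assoc, Matrix.mul_assoc, Matrix.trace_mul_comm]
    simp only [Matrix.mul_assoc]
  rw [h1, Matrix.trace]
  apply Finset.sum_nonneg
  intro i _
  rw [Matrix.diag_apply, Matrix.diagonal_mul]
  exact mul_nonneg (hd i) (hL.conjTranspose_mul_mul_same U).diag_nonneg

theorem aux_soft {p : ℕ} (τ : ℝ) {A : Matrix (Fin p) (Fin p) ℝ} (hA : A.IsHermitian) :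
    ∃ N : Matrix (Fin p) (Fin p) ℝ,
      (∀ L : Matrix (Fin p) (Fin p) ℝ, L.PosSemidef → 0 ≤ (N * L).trace) ∧
      (softThresh τ A).PosSemidef ∧ A - softThresh τ A = τ • (1 : Matrix _ _ ℝ) - N ∧
      (N * softThresh τ A).trace = 0 := by
  have hU : star (hA.eigenvectorUnitary : Matrix (Fin p) (Fin p) ℝ) *
      (hA.eigenvectorUnitary : Matrix (Fin p) (Fin p) ℝ) = 1 :=
    Unitary.coe_star_mul_self _
  have hU' : (hA.eigenvectorUnitary : Matrix (Fin p) (Fin p) ℝ) *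
      star (hA.eigenvectorUnitary : Matrix (Fin p) (Fin p) ℝ) = 1 :=
    Unitary.coe_mul_star_self _
  have hs : softThresh τ A = (hA.eigenvectorUnitary : Matrix (Fin p) (Fin p) ℝ) *
      Matrix.diagonal (fun i => max (hA.eigenvalues i - τ) 0) *
      (star (hA.eigenvectorUnitary : Matrix (Fin p) (Fin p) ℝ)) := by
    unfold softThresh
    rw [dif_pos hA]
  have hsp := aux_spectral hA
  rw [hs]
  generalize (hA.eigenvectorUnitary : Matrix (Fin p) (Fin p) ℝ) = U at *
  generalize hA.eigenvalues = l at *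
  refine ⟨U * Matrix.diagonal (fun i => max (τ - l i) 0) * star U, ?_, ?_, ?_, ?_⟩
  · intro L hL
    exact aux_trace_nonneg _ (fun i => le_max_right _ _) hL
  · exact aux_conj_psd _ _ (fun i => le_max_right _ _)
  · have h1 : τ • (1 : Matrix (Fin p) (Fin p) ℝ) =
        U * Matrix.diagonal (fun _ => τ) * star U := by
      rw [← Matrix.smul_one_eq_diagonal]
      simp [hU']
    rw [h1]
    conv_lhs => rw [hsp]
    simp only [← Matrix.sub_mul, ← Matrix.mul_sub, Matrix.diagonal_sub]
    congr 3
    funext i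
    rcases le_total (l i) τ with h | h
    · rw [max_eq_right (by linarith), max_eq_left (by linarith)]; ring
    · rw [max_eq_left (by linarith), max_eq_right (by linarith)]; ring
  · rw [aux_conj_mul _ hU, aux_conj_trace _ hU]
    apply Finset.sum_eq_zero
    intro i _
    rcases le_total (l i) τ with h | h
    · rw [max_eq_right (a := l i - τ) (by linarith), mul_zero]
    · rw [max_eq_right (a := τ - l i) (by linarith), zero_mul]

theorem aux_obj {p : ℕ} (τ : ℝ) (S : Matrix (Fin p) (Fin p) ℝ) {L : Matrix (Fin p) (Fin p) ℝ}
    (D : Matrix (Fin p) (Fin p) ℝ) (hL : L.PosSemidef) :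
    objF τ S L D = ∑ i, ∑ j, (τ * (1 : Matrix (Fin p) (Fin p) ℝ) i j * L i j +
      (1 / 2) * (S i j - L i j - D i j) ^ 2) := by
  have h0 : 0 ≤ ∑ i, ∑ j, ((S - (L + D)) i j) ^ 2 :=
    Finset.sum_nonneg fun i _ => Finset.sum_nonneg fun j _ => sq_nonneg _
  unfold objF frobNorm
  rw [Real.sq_sqrt h0, aux_nucNorm hL]
  simp only [Finset.sum_add_distrib, ← Finset.mul_sum, mul_assoc]
  congr 2
  · simp [Matrix.trace, Matrix.one_apply]
  · refine Finset.sum_congr rfl fun i _ => Finset.sum_congr rfl fun j _ => ?_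
    simp only [Matrix.sub_apply, Matrix.add_apply]
    ring

theorem aux_trace {p : ℕ} (N : Matrix (Fin p) (Fin p) ℝ) {L : Matrix (Fin p) (Fin p) ℝ}
    (hL : L.PosSemidef) : (N * L).trace = ∑ i, ∑ j, N i j * L i j := by
  simp only [Matrix.trace, Matrix.diag_apply, Matrix.mul_apply]
  refine Finset.sum_congr rfl fun i _ => Finset.sum_congr rfl fun j _ => ?_
  rw [← hL.isHermitian.apply i j]
  simp

theorem aux_key {p : ℕ} (τ : ℝ) (S D P N L' D' : Matrix (Fin p) (Fin p) ℝ)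
    (hP : P.PosSemidef) (hL' : L'.PosSemidef)
    (hN : S - D - P = τ • (1 : Matrix _ _ ℝ) - N) (hNP : (N * P).trace = 0) :
    objF τ S L' D' = objF τ S P D + (N * L').trace +
      (1 / 2) * ∑ i, ∑ j, (L' i j + D' i j - P i j - D i j) ^ 2 -
      ∑ i, ∑ j, (S - D - P) i j * (D' i j - D i j) := by
  have h : objF τ S L' D' = objF τ S P D + (N * L').trace - (N * P).trace +
      (1 / 2) * ∑ i, ∑ j, (L' i j + D' i j - P i j - D i j) ^ 2 -
      ∑ i, ∑ j, (S - D - P) i j * (D' i j - D i j) := by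
    rw [aux_obj τ S D' hL', aux_obj τ S D hP, aux_trace N hP, aux_trace N hL']
    simp only [Finset.mul_sum, ← Finset.sum_add_distrib, ← Finset.sum_sub_distrib]
    refine Finset.sum_congr rfl fun i _ => Finset.sum_congr rfl fun j _ => ?_
    have e := congrFun (congrFun hN i) j
    simp only [Matrix.sub_apply, Matrix.smul_apply, smul_eq_mul] at e ⊢
    linear_combination (P i j - L' i j) * e
  rw [h, hNP]; ring

theorem aux_herm {p : ℕ} {D : Matrix (Fin p) (Fin p) ℝ} (hD : D = pdiag D) :
    D.IsHermitian := by
  rw [hD]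
  ext i j
  by_cases h : i = j
  · subst h; simp [pdiag]
  · simp [pdiag, h, Ne.symm h]

theorem aux_off {p : ℕ} {D : Matrix (Fin p) (Fin p) ℝ} (hD : D = pdiag D) {i j : Fin p}
    (h : i ≠ j) : D i j = 0 := by
  rw [hD]; simp [pdiag, h]

theorem aux_pdiag_pdiag {p : ℕ} (M : Matrix (Fin p) (Fin p) ℝ) :
    pdiag M = pdiag (pdiag M) := by
  ext i j
  by_cases h : i = j <;> simp [pdiag, h]

theorem aux_sq_zero {p : ℕ} {f : Fin p → Fin p → ℝ} (h : ∑ i, ∑ j, (f i j) ^ 2 ≤ 0)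
    (i j : Fin p) : f i j = 0 := by
  have h1 := Finset.single_le_sum (f := fun j => (f i j) ^ 2) (fun j _ => sq_nonneg _)
    (Finset.mem_univ j)
  have h2 := Finset.single_le_sum (f := fun i => ∑ j, (f i j) ^ 2)
    (fun i _ => Finset.sum_nonneg fun j _ => sq_nonneg _) (Finset.mem_univ i)
  have h3 : (f i j) ^ 2 ≤ 0 := by
    linarith
  exact pow_eq_zero_iff (two_ne_zero) |>.1 (le_antisymm h3 (sq_nonneg _))

end RMTFAHelpers

/-- fixed-point characterization: a pair `(L, D)` with `L ∈ S^p₊` and `D`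
diagonal is the global minimizer of the relaxed-MTFA objective iff
`L = D_τ⁺(Σ − D)` and `D = pdiag(Σ − L)`. -/
theorem rmtfa_fixed_point_iff (p : ℕ) (S : Matrix (Fin p) (Fin p) ℝ) (hS : S.IsHermitian)
    (τ : ℝ) (hτ : 0 < τ)
    (L D : Matrix (Fin p) (Fin p) ℝ) (hL : L.PosSemidef) (hD : D = pdiag D) :
    (∀ L' D' : Matrix (Fin p) (Fin p) ℝ, L'.PosSemidef → D' = pdiag D' →
        objF τ S L D ≤ objF τ S L' D') ↔
    (L = softThresh τ (S - D) ∧ D = pdiag (S - L)) := by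
  have hA : (S - D).IsHermitian := hS.sub (aux_herm hD)
  obtain ⟨N, hN0, hP, hN, hNP⟩ := aux_soft τ hA
  constructor
  · intro hmin
    constructor
    · have h1 := hmin _ D hP hD
      rw [aux_key τ S D _ N L D hP hL hN hNP] at h1
      have h2 := hN0 L hL
      simp only [sub_self, mul_zero, Finset.sum_const_zero] at h1
      have h3 : ∑ i, ∑ j, (L i j + D i j - softThresh τ (S - D) i j - D i j) ^ 2 ≤ 0 := by
        linarith
      ext i j
      have := aux_sq_zero h3 i j
      linarith
    · have h1 := hmin L (pdiag (S - L)) hL (aux_pdiag_pdiag _)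
      rw [aux_obj τ S _ hL, aux_obj τ S _ hL] at h1
      have h3 : ∑ i, ∑ j, (D i j - pdiag (S - L) i j) ^ 2 ≤ 0 := by
        have h4 : (1 / 2 : ℝ) * ∑ i, ∑ j, (D i j - pdiag (S - L) i j) ^ 2 =
            ∑ i, ∑ j, (τ * (1 : Matrix (Fin p) (Fin p) ℝ) i j * L i j +
              (1 / 2) * (S i j - L i j - D i j) ^ 2) -
            ∑ i, ∑ j, (τ * (1 : Matrix (Fin p) (Fin p) ℝ) i j * L i j +
              (1 / 2) * (S i j - L i j - pdiag (S - L) i j) ^ 2) := by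
          simp only [Finset.mul_sum, ← Finset.sum_sub_distrib]
          refine Finset.sum_congr rfl fun i _ => Finset.sum_congr rfl fun j _ => ?_
          by_cases h : i = j
          · subst h
            simp only [pdiag, Matrix.of_apply, Matrix.sub_apply, if_true]
            ring
          · rw [aux_off hD h, aux_off (aux_pdiag_pdiag _) h]
            ring
        linarith
      ext i j
      have := aux_sq_zero h3 i j
      linarith
  · rintro ⟨h1, h2⟩ L' D' hL' hD'
    rw [← h1] at hP hN hNP
    rw [aux_key τ S D L N L' D' hL hL' hN hNP]
    have h3 := hN0 L' hL'
    have h4 : 0 ≤ ∑ i, ∑ j, (L' i j + D' i j - L i j - D i j) ^ 2 :=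
      Finset.sum_nonneg fun i _ => Finset.sum_nonneg fun j _ => sq_nonneg _
    have h5 : ∑ i, ∑ j, (S - D - L) i j * (D' i j - D i j) = 0 := by
      refine Finset.sum_eq_zero fun i _ => Finset.sum_eq_zero fun j _ => ?_
      by_cases h : i = j
      · subst h
        have e := congrFun (congrFun h2 i) i
        simp only [pdiag, Matrix.of_apply, Matrix.sub_apply, if_true] at e
        simp only [Matrix.sub_apply]
        rw [e]; ring
      · rw [aux_off hD h, aux_off hD' h]; ring
    linarith
end

section
/- Let Σ ∈ S^p and 0 < ψ < ‖poffdiag(Σ)‖_F². If (L̂, D̂) is a global minimizer of the constrained problem: minimize ‖L‖_* over L ∈ S^p_+ and diagonal D subject to ‖Σ − (L+D)‖_F² ≤ ψ, then there exists τ > 0 such that (L̂, D̂) is a global minimizer of F(L,D) = τ‖L‖_* + (1/2)‖Σ − (L+D)‖_F² over L ∈ S^p_+ and diagonal D. -/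
open Matrix MeasureTheory ProbabilityTheory BigOperators

/-- Abstract Lagrange multiplier lemma. -/
lemma lagrange_aux {E : Type*} (C : E → Prop) (n f : E → ℝ) (ψ m : ℝ) (z y₀ : E)
    (mix : ∀ x y : E, C x → C y → ∀ t : ℝ, 0 ≤ t → t ≤ 1 → ∃ w, C w ∧
      n w ≤ t * n x + (1 - t) * n y ∧ f w ≤ t * f x + (1 - t) * f y)
    (hopt : ∀ x, C x → f x ≤ ψ → m ≤ n x)
    (hy₀ : C y₀) (hfy₀ : f y₀ < ψ) (hz : C z) (hfz : ψ < f z) (hnz : n z < m) :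
    ∃ l : ℝ, 0 < l ∧ ∀ x, C x → m ≤ n x + l * (f x - ψ) := by
  have key : ∀ x y, C x → C y → ψ < f x → f y < ψ →
      (m - n x) / (f x - ψ) ≤ (n y - m) / (ψ - f y) := by
    intro x y hx hy hfx hfy
    have h1 : 0 < f x - ψ := by linarith
    have h2 : 0 < ψ - f y := by linarith
    have h3 : 0 < f x - f y := by linarith
    obtain ⟨w, hw, hnw, hfw⟩ := mix x y hx hy ((ψ - f y) / (f x - f y)) (by positivity)
      (by rw [div_le_one h3]; linarith)
    have h4 : (ψ - f y) / (f x - f y) * f x + (1 - (ψ - f y) / (f x - f y)) * f y = ψ := by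
      field_simp; ring
    have h5 := hopt w hw (by linarith)
    have h6 : m ≤ (ψ - f y) / (f x - f y) * n x + (1 - (ψ - f y) / (f x - f y)) * n y := by
      linarith
    have h7 : (ψ - f y) / (f x - f y) * n x + (1 - (ψ - f y) / (f x - f y)) * n y
        = ((ψ - f y) * n x + (f x - ψ) * n y) / (f x - f y) := by
      field_simp; ring
    rw [h7, le_div_iff₀ h3] at h6
    rw [div_le_div_iff₀ h1 h2]
    nlinarith
  set A : Set ℝ := {a | ∃ x, C x ∧ ψ < f x ∧ a = (m - n x) / (f x - ψ)} with hA
  have hbdd : BddAbove A := ⟨(n y₀ - m) / (ψ - f y₀), by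
    rintro a ⟨x, hx, hfx, rfl⟩
    exact key x y₀ hx hy₀ hfx hfy₀⟩
  have hne : A.Nonempty := ⟨_, z, hz, hfz, rfl⟩
  refine ⟨sSup A, ?_, ?_⟩
  · have : (m - n z) / (f z - ψ) ≤ sSup A := le_csSup hbdd ⟨z, hz, hfz, rfl⟩
    have : 0 < (m - n z) / (f z - ψ) := div_pos (by linarith) (by linarith)
    linarith
  · intro x hx
    rcases lt_trichotomy (f x) ψ with h | h | h
    · have h1 : sSup A ≤ (n x - m) / (ψ - f x) := csSup_le hne (by
        rintro a ⟨w, hw, hfw, rfl⟩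
        exact key w x hw hx hfw h)
      rw [le_div_iff₀ (by linarith)] at h1
      linarith
    · have := hopt x hx h.le
      rw [h]; linarith
    · have h1 : (m - n x) / (f x - ψ) ≤ sSup A := le_csSup hbdd ⟨x, hx, h, rfl⟩
      rw [div_le_iff₀ (by linarith)] at h1
      linarith

lemma nucNorm_psd {p : ℕ} (L : Matrix (Fin p) (Fin p) ℝ) (hL : L.PosSemidef) :
    nucNorm L = L.trace := by
  have hH := hL.isHermitian
  have hM := (Matrix.posSemidef_conjTranspose_mul_self L).isHermitian
  have hchar : (Lᴴ * L).charpoly = ∏ i, (Polynomial.X - Polynomial.C ((hH.eigenvalues i) ^ 2)) := by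
    have h1 : Lᴴ * L = (hH.eigenvectorUnitary : Matrix (Fin p) (Fin p) ℝ) *
        Matrix.diagonal (fun i => (hH.eigenvalues i) ^ 2) *
        (star (hH.eigenvectorUnitary : Matrix (Fin p) (Fin p) ℝ)) := by
      rw [hH.eq]
      conv_lhs => rw [hH.spectral_theorem, ← map_mul, Matrix.diagonal_mul_diagonal,
        Unitary.conjStarAlgAut_apply]
      simp [pow_two]
    rw [h1, Matrix.charpoly_mul_comm, ← mul_assoc]
    simp [Matrix.charpoly_diagonal]
  have hroots := hM.roots_charpoly_eq_eigenvalues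
  rw [hchar, Polynomial.roots_prod _ _ (Finset.prod_ne_zero_iff.mpr fun i _ =>
    Polynomial.X_sub_C_ne_zero _)] at hroots
  simp only [Polynomial.roots_X_sub_C, Multiset.bind_singleton] at hroots
  have h2 := congrArg (fun s : Multiset ℝ => (s.map Real.sqrt).sum) hroots
  simp only [Multiset.map_map, Function.comp_def] at h2
  have h4 : ∑ i, Real.sqrt (hH.eigenvalues i ^ 2) = ∑ i, Real.sqrt (hM.eigenvalues i) := h2
  have h3 : L.trace = ∑ i, hH.eigenvalues i := by
    simpa using hH.trace_eq_sum_eigenvalues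
  have h5 : ∑ i, Real.sqrt (hH.eigenvalues i ^ 2) = ∑ i, hH.eigenvalues i :=
    Finset.sum_congr rfl fun i _ => Real.sqrt_sq (hL.eigenvalues_nonneg i)
  rw [h3, ← h5, h4]
  rfl

lemma frobNorm_sq {p : ℕ} (M : Matrix (Fin p) (Fin p) ℝ) :
    frobNorm M ^ 2 = ∑ i, ∑ j, (M i j) ^ 2 :=
  Real.sq_sqrt (Finset.sum_nonneg fun _ _ => Finset.sum_nonneg fun _ _ => sq_nonneg _)

lemma exists_shift_psd {p : ℕ} (S : Matrix (Fin p) (Fin p) ℝ) (hS : S.IsHermitian) :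
    ∃ c : ℝ, (S + c • (1 : Matrix (Fin p) (Fin p) ℝ)).PosSemidef := by
  refine ⟨∑ i, |hS.eigenvalues i|, ?_⟩
  set c := ∑ i, |hS.eigenvalues i| with hc
  have h1 : S + c • (1 : Matrix (Fin p) (Fin p) ℝ) =
      (hS.eigenvectorUnitary : Matrix (Fin p) (Fin p) ℝ) *
        Matrix.diagonal (fun i => hS.eigenvalues i + c) *
        (hS.eigenvectorUnitary : Matrix (Fin p) (Fin p) ℝ)ᴴ := by
    have h2 : Matrix.diagonal (fun i => hS.eigenvalues i + c) =
        Matrix.diagonal (hS.eigenvalues) + c • (1 : Matrix (Fin p) (Fin p) ℝ) := by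
      ext i j
      by_cases h : i = j <;> simp [h, Matrix.one_apply]
    rw [h2, mul_add, add_mul]
    have h3 := hS.spectral_theorem
    rw [Unitary.conjStarAlgAut_apply] at h3
    conv_lhs => rw [h3]
    congr 1
    rw [mul_smul_comm, smul_mul_assoc, mul_one, ← Matrix.star_eq_conjTranspose]
    simp
  rw [h1]
  refine Matrix.PosSemidef.mul_mul_conjTranspose_same (Matrix.PosSemidef.diagonal ?_) _
  intro i
  have h4 : |hS.eigenvalues i| ≤ c :=
    Finset.single_le_sum (f := fun i => |hS.eigenvalues i|) (fun _ _ => abs_nonneg _)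
      (Finset.mem_univ i)
  have := neg_abs_le (hS.eigenvalues i)
  simp only [Pi.zero_apply]
  linarith

lemma offdiag_le {p : ℕ} (S D : Matrix (Fin p) (Fin p) ℝ) (hD : D = pdiag D) :
    frobNorm (poffdiag S) ^ 2 ≤ frobNorm (S - (0 + D)) ^ 2 := by
  rw [frobNorm_sq, frobNorm_sq]
  refine Finset.sum_le_sum fun i _ => Finset.sum_le_sum fun j _ => ?_
  rw [hD]
  by_cases h : i = j
  · simp [poffdiag, pdiag, h]; positivity
  · simp [poffdiag, pdiag, h]

lemma pdiag_mix {p : ℕ} (D D' : Matrix (Fin p) (Fin p) ℝ) (hD : D = pdiag D)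
    (hD' : D' = pdiag D') (a b : ℝ) : a • D + b • D' = pdiag (a • D + b • D') := by
  rw [hD, hD']
  ext i j
  by_cases h : i = j <;> simp [pdiag, h]

lemma frob_mix {p : ℕ} (S L D L' D' : Matrix (Fin p) (Fin p) ℝ) (t : ℝ) (h0 : 0 ≤ t)
    (h1 : t ≤ 1) :
    frobNorm (S - ((t • L + (1 - t) • L') + (t • D + (1 - t) • D'))) ^ 2 ≤
      t * frobNorm (S - (L + D)) ^ 2 + (1 - t) * frobNorm (S - (L' + D')) ^ 2 := by
  simp only [frobNorm_sq, Finset.mul_sum, ← Finset.sum_add_distrib]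
  refine Finset.sum_le_sum fun i _ => Finset.sum_le_sum fun j _ => ?_
  simp only [Matrix.sub_apply, Matrix.add_apply, Matrix.smul_apply, smul_eq_mul]
  have h2 : 0 ≤ t * (1 - t) * (L i j + D i j - (L' i j + D' i j)) ^ 2 :=
    mul_nonneg (mul_nonneg h0 (by linarith)) (sq_nonneg _)
  nlinarith

/-- if `0 < ψ < ‖poffdiag Σ‖_F²`, a global minimizer of the constrained
problem is a global minimizer of the penalized objective for some `τ > 0`. -/
theorem constrained_min_is_rmtfa_min (p : ℕ) (S : Matrix (Fin p) (Fin p) ℝ)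
    (hS : S.IsHermitian) (ψ : ℝ) (hψ0 : 0 < ψ) (hψ1 : ψ < (frobNorm (poffdiag S)) ^ 2)
    (Lhat Dhat : Matrix (Fin p) (Fin p) ℝ)
    (hfeas : Lhat.PosSemidef ∧ Dhat = pdiag Dhat ∧
      (frobNorm (S - (Lhat + Dhat))) ^ 2 ≤ ψ)
    (hopt : ∀ L D : Matrix (Fin p) (Fin p) ℝ, L.PosSemidef → D = pdiag D →
      (frobNorm (S - (L + D))) ^ 2 ≤ ψ → nucNorm Lhat ≤ nucNorm L) :
    ∃ τ : ℝ, 0 < τ ∧ IsRMTFAMin τ S Lhat Dhat := by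
  obtain ⟨hL, hD, hf⟩ := hfeas
  obtain ⟨c, hc⟩ := exists_shift_psd S hS
  have hzd : (0 : Matrix (Fin p) (Fin p) ℝ) = pdiag 0 := by
    ext i j; simp [pdiag]
  have htr0 : 0 ≤ Lhat.trace := hL.trace_nonneg
  have htr : 0 < Lhat.trace := by
    refine lt_of_le_of_ne htr0 fun h => ?_
    have h0 : Lhat = 0 := hL.trace_eq_zero_iff.mp h.symm
    rw [h0] at hf
    have := offdiag_le S Dhat hD
    linarith
  obtain ⟨l, hl, hlag⟩ := lagrange_aux
    (E := Matrix (Fin p) (Fin p) ℝ × Matrix (Fin p) (Fin p) ℝ)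
    (fun x => x.1.PosSemidef ∧ x.2 = pdiag x.2) (fun x => x.1.trace)
    (fun x => frobNorm (S - (x.1 + x.2)) ^ 2) ψ Lhat.trace (0, 0)
    (S + c • (1 : Matrix (Fin p) (Fin p) ℝ), -(c • (1 : Matrix (Fin p) (Fin p) ℝ)))
    (by
      rintro ⟨L, D⟩ ⟨L', D'⟩ ⟨h1, h2⟩ ⟨h3, h4⟩ t ht0 ht1
      refine ⟨(t • L + (1 - t) • L', t • D + (1 - t) • D'),
        ⟨(h1.smul ht0).add (h3.smul (by linarith)), pdiag_mix D D' h2 h4 _ _⟩, ?_,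
        frob_mix S L D L' D' t ht0 ht1⟩
      simp)
    (by
      rintro ⟨L, D⟩ ⟨h1, h2⟩ h3
      have := hopt L D h1 h2 h3
      rwa [nucNorm_psd _ hL, nucNorm_psd _ h1] at this)
    ⟨hc, by ext i j; by_cases h : i = j <;> simp [pdiag, h]⟩
    (by simp [frobNorm_sq]; exact hψ0)
    ⟨Matrix.PosSemidef.zero, hzd⟩
    (lt_of_lt_of_le hψ1 (offdiag_le S 0 hzd))
    (by simpa using htr)
  have hslack := hlag (Lhat, Dhat) ⟨hL, hD⟩
  simp only at hslack
  have hfψ : frobNorm (S - (Lhat + Dhat)) ^ 2 = ψ := by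
    refine le_antisymm hf ?_
    by_contra hcon
    push Not at hcon
    nlinarith
  refine ⟨1 / (2 * l), by positivity, hL, hD, fun L' D' hL' hD' => ?_⟩
  have h := hlag (L', D') ⟨hL', hD'⟩
  simp only at h
  unfold objF
  rw [nucNorm_psd _ hL, nucNorm_psd _ hL', hfψ]
  have h1 : 1 / (2 * l) * Lhat.trace ≤
      1 / (2 * l) * (L'.trace + l * (frobNorm (S - (L' + D')) ^ 2 - ψ)) :=
    mul_le_mul_of_nonneg_left h (by positivity)
  have h2 : 1 / (2 * l) * (L'.trace + l * (frobNorm (S - (L' + D')) ^ 2 - ψ)) =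
      1 / (2 * l) * L'.trace + 1 / 2 * (frobNorm (S - (L' + D')) ^ 2 - ψ) := by
    field_simp
  linarith
end
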